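/- Fix c > 0, weights w₁, …, w_r ∈ ℝ, and consider the parameter θ = ((β₁₁, …, β₁ᵣ), (B₁, …, B_r)) consisting of vectors β₁ₖ ∈ ℝⁿ and symmetric n×n matrices Bₖ. Define the Kuhn–Tucker map F(θ, x, λ) = ( Σₖ wₖ (β₁ₖ + 2 Bₖ x) + 2 λ x , ‖x‖² − c² ) ∈ ℝⁿ × ℝ. Suppose at θ₀ = ((β₁ₖ⁰), (Bₖ⁰)) there is a point (x₀, λ₀) with F(θ₀, x₀, λ₀) = 0, λ₀ > 0 (strict complementarity), and the matrix 2 Σₖ wₖ Bₖ⁰ + 2 λ₀ I positive definite (second-order sufficient condition). Then there exist an open neighborhood U of θ₀ and continuously differentiable functions x(·) : U → ℝⁿ and λ(·) : U → ℝ with x(θ₀) = x₀, λ(θ₀) = λ₀, and F(θ, x(θ), λ(θ)) = 0 for every θ ∈ U; moreover (x(θ), λ(θ)) is the unique solution of F(θ, ·, ·) = 0 in a fixed neighborhood of (x₀, λ₀). -/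

import Mathlib

/-!
The theorem is the implicit function theorem for `F(θ, (x, λ))` at `(θ₀, (x₀, λ₀))`. The map is
polynomial, hence smooth (`contDiff_KT`). Restricted to a line in the `(x, λ)` variables it is
exactly quadratic (`KTmap_line`), which gives its partial derivative as the bordered matrix
`(h, μ) ↦ (M h + 2 μ x₀, 2 ⟨x₀, h⟩)` with `M = 2 Σₖ wₖ Bₖ⁰ + 2 λ₀ I`. If `(h, μ)` is in the kernel,
then `⟨x₀, h⟩ = 0`, so `⟨h, M h⟩ = -2 μ ⟨x₀, h⟩ = 0` and `h = 0` because `M` is positive definite;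
then `μ x₀ = 0`, and `μ = 0` because `‖x₀‖² = c² > 0`. Injectivity gives invertibility in finite
dimension.
-/

open Matrix Filter Topology

attribute [local instance] Matrix.normedAddCommGroup Matrix.normedSpace

/-- The Kuhn–Tucker map of the scalarized multiresponse surface program
`min Σₖ wₖ Ŷₖ(x)` subject to `‖x‖² ≤ c²`, as a function of the parameter
`θ = ((β₁ₖ), (Bₖ))`, the point `x` and the multiplier `λ`:
`F(θ, x, λ) = (Σₖ wₖ (β₁ₖ + 2 Bₖ x) + 2 λ x, ‖x‖² - c²)`. -/
noncomputable def KTmap (n r : ℕ) (w : Fin r → ℝ) (c : ℝ)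
    (θ : (Fin r → (Fin n → ℝ)) × (Fin r → Matrix (Fin n) (Fin n) ℝ))
    (x : Fin n → ℝ) (lam : ℝ) : (Fin n → ℝ) × ℝ :=
  (∑ k, w k • (θ.1 k + (2 : ℝ) • (θ.2 k).mulVec x) + (2 * lam) • x,
    (∑ i, x i ^ 2) - c ^ 2)

theorem contDiff_KT (n r : ℕ) (w : Fin r → ℝ) (c : ℝ) :
    ContDiff ℝ 1 (fun p : ((Fin r → (Fin n → ℝ)) × (Fin r → Matrix (Fin n) (Fin n) ℝ)) ×
      ((Fin n → ℝ) × ℝ) => KTmap n r w c p.1 p.2.1 p.2.2) := by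
  have hB : ∀ (k : Fin r) (i j : Fin n), ContDiff ℝ 1
      (fun p : ((Fin r → (Fin n → ℝ)) × (Fin r → Matrix (Fin n) (Fin n) ℝ)) ×
        ((Fin n → ℝ) × ℝ) => p.1.2 k i j) := by
    intro k i j
    have h1 : ContDiff ℝ 1
      (fun p : ((Fin r → (Fin n → ℝ)) × (Fin r → Matrix (Fin n) (Fin n) ℝ)) ×
        ((Fin n → ℝ) × ℝ) => p.1.2 k) := by fun_prop
    -- The local normed structure on matrices is that of the iterated product `Fin n → Fin n → ℝ`.
    have h2 : ContDiff ℝ 1 (fun A : Fin n → Fin n → ℝ => A i j) := by fun_prop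
    exact ContDiff.comp (F := Fin n → Fin n → ℝ) h2 h1
  unfold KTmap
  refine ContDiff.prodMk (contDiff_pi.2 fun i => ?_) (by fun_prop)
  simp only [Pi.add_apply, Finset.sum_apply, Pi.smul_apply, Matrix.mulVec, dotProduct, smul_eq_mul]
  fun_prop

/-- Expansion of the Kuhn–Tucker map along a line in the `(x, λ)` variables: it is a quadratic
polynomial in `t`, whose linear coefficient is the bordered matrix applied to the direction. -/
theorem KTmap_line (n r : ℕ) (w : Fin r → ℝ) (c : ℝ)
    (θ : (Fin r → (Fin n → ℝ)) × (Fin r → Matrix (Fin n) (Fin n) ℝ))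
    (x h : Fin n → ℝ) (lam μ t : ℝ) :
    KTmap n r w c θ (x + t • h) (lam + t * μ) = KTmap n r w c θ x lam
      + t • (((2 : ℝ) • (∑ k, w k • θ.2 k) + (2 * lam) • (1 : Matrix (Fin n) (Fin n) ℝ)) *ᵥ h
          + (2 * μ) • x, 2 * (x ⬝ᵥ h))
      + t ^ 2 • ((2 * μ) • h, h ⬝ᵥ h) := by
  unfold KTmap
  refine Prod.ext ?_ ?_
  · simp only [Matrix.add_mulVec, Matrix.smul_mulVec, Matrix.sum_mulVec, Matrix.one_mulVec,
      Matrix.mulVec_add, Matrix.mulVec_smul, Prod.fst_add, Prod.smul_fst]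
    ext i
    simp only [Pi.add_apply, Finset.sum_apply, Pi.smul_apply, smul_eq_mul, mul_add,
      Finset.sum_add_distrib, Finset.mul_sum]
    have e : ∀ k : Fin r, w k * (2 * (t * (θ.2 k *ᵥ h) i)) = t * (2 * (w k * (θ.2 k *ᵥ h) i)) :=
      fun k => by ring
    simp only [e]
    ring
  · simp only [Prod.snd_add, Prod.smul_snd, dotProduct, Pi.add_apply, Pi.smul_apply, smul_eq_mul,
      Finset.mul_sum]
    have e : ∀ i : Fin n, (x i + t * h i) ^ 2
        = x i ^ 2 + t * (2 * (x i * h i)) + t ^ 2 * (h i * h i) := fun i => by ring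
    simp only [e, Finset.sum_add_distrib]
    ring

theorem fderiv_KT_inr (n r : ℕ) (w : Fin r → ℝ) (c : ℝ)
    (θ : (Fin r → (Fin n → ℝ)) × (Fin r → Matrix (Fin n) (Fin n) ℝ))
    (x h : Fin n → ℝ) (lam μ : ℝ) :
    fderiv ℝ (fun p : ((Fin r → (Fin n → ℝ)) × (Fin r → Matrix (Fin n) (Fin n) ℝ)) ×
      ((Fin n → ℝ) × ℝ) => KTmap n r w c p.1 p.2.1 p.2.2) (θ, (x, lam)) (0, (h, μ))
    = (((2 : ℝ) • (∑ k, w k • θ.2 k) + (2 * lam) • (1 : Matrix (Fin n) (Fin n) ℝ)) *ᵥ h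
          + (2 * μ) • x, 2 * (x ⬝ᵥ h)) := by
  have hf := ((contDiff_KT n r w c).differentiable one_ne_zero (θ, (x, lam))).hasFDerivAt
  have h1 := hf.hasLineDerivAt (0, (h, μ))
  unfold HasLineDerivAt at h1
  refine h1.unique ?_
  have h2 : ∀ a b d : (Fin n → ℝ) × ℝ,
      HasDerivAt (fun t : ℝ => a + t • b + t ^ 2 • d) b 0 := by
    intro a b d
    have := (((hasDerivAt_id (0 : ℝ)).smul_const b).const_add a).add
      ((hasDerivAt_pow 2 (0 : ℝ)).smul_const d)
    exact this.congr_deriv (by simp)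
  refine (h2 (KTmap n r w c θ x lam) _ ((2 * μ) • h, h ⬝ᵥ h)).congr_of_eventuallyEq
    (Eventually.of_forall fun t => ?_)
  simp only [← KTmap_line, Prod.fst_add, Prod.snd_add, Prod.smul_fst, Prod.smul_snd, smul_zero,
    add_zero, smul_eq_mul]

/-- **Sensitivity of the Kuhn–Tucker point (implicit function theorem).**
Under strict complementarity (`λ₀ > 0`) and the second-order sufficient condition
(`2 Σₖ wₖ Bₖ⁰ + 2 λ₀ I` positive definite) at a solution `(x₀, λ₀)` of the Kuhn–Tucker
system at `θ₀`, there are a neighborhood `U` of `θ₀` and continuously differentiable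
maps `x(·), λ(·)` on `U` with `x(θ₀) = x₀`, `λ(θ₀) = λ₀`, solving the Kuhn–Tucker
system for every `θ ∈ U`, and giving the unique solution in a fixed neighborhood of
`(x₀, λ₀)`. -/
theorem KT_implicit_solution
    (n r : ℕ) (w : Fin r → ℝ) (c : ℝ) (hc : 0 < c)
    (θ₀ : (Fin r → (Fin n → ℝ)) × (Fin r → Matrix (Fin n) (Fin n) ℝ))
    (hsym : ∀ k, (θ₀.2 k).IsSymm)
    (x₀ : Fin n → ℝ) (lam₀ : ℝ)
    (hsol : KTmap n r w c θ₀ x₀ lam₀ = 0)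
    (hlam : 0 < lam₀)
    (hpd : ((2 : ℝ) • (∑ k, w k • θ₀.2 k)
        + (2 * lam₀) • (1 : Matrix (Fin n) (Fin n) ℝ)).PosDef) :
    ∃ U : Set ((Fin r → (Fin n → ℝ)) × (Fin r → Matrix (Fin n) (Fin n) ℝ)),
      IsOpen U ∧ θ₀ ∈ U ∧
      ∃ (xf : ((Fin r → (Fin n → ℝ)) × (Fin r → Matrix (Fin n) (Fin n) ℝ)) → (Fin n → ℝ))
        (lf : ((Fin r → (Fin n → ℝ)) × (Fin r → Matrix (Fin n) (Fin n) ℝ)) → ℝ),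
        ContDiffOn ℝ 1 xf U ∧ ContDiffOn ℝ 1 lf U ∧
        xf θ₀ = x₀ ∧ lf θ₀ = lam₀ ∧
        (∀ θ ∈ U, KTmap n r w c θ (xf θ) (lf θ) = 0) ∧
        ∃ W ∈ 𝓝 ((x₀, lam₀) : (Fin n → ℝ) × ℝ),
          ∀ θ ∈ U, ∀ q : (Fin n → ℝ) × ℝ, q ∈ W →
            KTmap n r w c θ q.1 q.2 = 0 → q = (xf θ, lf θ) := by
  classical
  set f := fun p : ((Fin r → (Fin n → ℝ)) × (Fin r → Matrix (Fin n) (Fin n) ℝ)) ×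
      ((Fin n → ℝ) × ℝ) => KTmap n r w c p.1 p.2.1 p.2.2 with hf
  have cdf : ContDiffAt ℝ 1 f (θ₀, (x₀, lam₀)) := (contDiff_KT n r w c).contDiffAt
  have hx₀ : x₀ ≠ 0 := by
    rintro rfl
    have h := congrArg Prod.snd hsol
    simp [KTmap] at h
    exact hc.ne' h
  have hinj : Function.Injective (fderiv ℝ f (θ₀, (x₀, lam₀)) ∘L
      .inr ℝ ((Fin r → (Fin n → ℝ)) × (Fin r → Matrix (Fin n) (Fin n) ℝ)) ((Fin n → ℝ) × ℝ)) := by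
    rw [injective_iff_map_eq_zero]
    rintro ⟨h, μ⟩ h0
    rw [ContinuousLinearMap.comp_apply, ContinuousLinearMap.inr_apply, fderiv_KT_inr] at h0
    obtain ⟨h1, h2⟩ := Prod.mk.inj h0
    have hxh : x₀ ⬝ᵥ h = 0 := by linarith
    have hh : h = 0 := by
      by_contra hne
      have hpos := hpd.dotProduct_mulVec_pos hne
      have h3 := congrArg (fun v => h ⬝ᵥ v) h1
      simp only [dotProduct_add, dotProduct_smul, dotProduct_comm h x₀, hxh, smul_zero, add_zero,
        dotProduct_zero] at h3
      rw [star_trivial, h3] at hpos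
      exact lt_irrefl _ hpos
    subst hh
    simp [hx₀] at h1
    simp [h1]
  have hinv : (fderiv ℝ f (θ₀, (x₀, lam₀)) ∘L
      .inr ℝ ((Fin r → (Fin n → ℝ)) × (Fin r → Matrix (Fin n) (Fin n) ℝ))
        ((Fin n → ℝ) × ℝ)).IsInvertible :=
    ⟨(LinearEquiv.ofInjectiveEndo _ hinj).toContinuousLinearEquiv, by ext v <;> rfl⟩
  set ψ := cdf.implicitFunction one_ne_zero hinv with hψ
  have hψ0 : ψ θ₀ = (x₀, lam₀) := cdf.implicitFunction_apply_self one_ne_zero hinv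
  have hsmooth : ∀ᶠ θ in 𝓝 θ₀, ContDiffAt ℝ 1 ψ θ :=
    (cdf.contDiffAt_implicitFunction one_ne_zero hinv).eventually (by simp)
  have hsolve : ∀ᶠ θ in 𝓝 θ₀, f (θ, ψ θ) = f (θ₀, (x₀, lam₀)) :=
    cdf.eventually_apply_implicitFunction one_ne_zero hinv
  have huniq := cdf.eventually_apply_eq_iff_implicitFunction one_ne_zero hinv
  rw [nhds_prod_eq] at huniq
  obtain ⟨V, hV, W, hW, hVW⟩ := mem_prod_iff.1 huniq
  obtain ⟨U, hU, hUo, hθU⟩ := mem_nhds_iff.1 (inter_mem (inter_mem hsmooth hsolve) hV)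
  have hf0 : f (θ₀, (x₀, lam₀)) = 0 := hsol
  have hψU : ContDiffOn ℝ 1 ψ U := fun θ hθ =>
    ContDiffAt.contDiffWithinAt (show ContDiffAt ℝ 1 ψ θ from (hU hθ).1.1)
  refine ⟨U, hUo, hθU, fun θ => (ψ θ).1, fun θ => (ψ θ).2, hψU.fst, hψU.snd,
    by simp [hψ0], by simp [hψ0], fun θ hθ => (hU hθ).1.2.trans hf0, W, hW, ?_⟩
  intro θ hθ q hq hKT
  have h := (hVW (Set.mk_mem_prod (hU hθ).2 hq)).1 (Eq.trans hKT hf0.symm)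
  exact h.symm
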